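/- arXiv:2103.02321 — 2 statements merged into one kernel-verified Lean document; each statement's English description precedes it below -/
import Mathlib

section
/- Let u be quasi-definite with SMOP (P_n) and recurrence coefficients (a_n, b_n), let c ∈ ℂ, and let û be quasi-definite with u = (x−c)²û and SMOP (Q_n). Write Q_n = P_n + α_{n,n−1}P_{n−1} + α_{n,n−2}P_{n−2} for n ≥ 2, Q_1 = P_1 + α_{1,0}, Q_0 = P_0, with the convention α_{n,m} = 0 for m < 0. Then the recurrence x Q_n = Q_{n+1} + b̂_n Q_n + â_n Q_{n−1} (Q_{−1} = 0) holds with b̂_n = b_n + α_{n,n−1} − α_{n+1,n} for all n ≥ 0, â_n = (α_{n,n−2}/α_{n−1,n−3})·a_{n−2} for n ≥ 3, â_2 = u_0·û_0·α_{2,0}/(u_0·û_0 − (û_1 − c·û_0)²), and â_1 = (u_0·û_0 − (û_1 − c·û_0)²)/û_0². -/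
open Polynomial

noncomputable section

/-- Apply a linear functional (identified with its moment sequence) to a polynomial:
`⟨u, p⟩ = Σ_k c_k u_k` for `p = Σ_k c_k x^k`. -/
def fapply (u : ℕ → ℂ) (p : Polynomial ℂ) : ℂ := p.sum fun k ck => ck * u k

/-- `P` is the sequence of monic orthogonal polynomials (SMOP) of the functional `u`. -/
def IsSMOP (u : ℕ → ℂ) (P : ℕ → Polynomial ℂ) : Prop :=
  (∀ n, (P n).Monic) ∧ (∀ n, (P n).natDegree = n) ∧
    (∀ n m, n ≠ m → fapply u (P n * P m) = 0) ∧ (∀ n, fapply u (P n * P n) ≠ 0)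

/-- A functional is quasi-definite iff it admits a SMOP. -/
def IsQuasiDefinite (u : ℕ → ℂ) : Prop := ∃ P, IsSMOP u P

/-- Three term recurrence relation `x P_n = P_{n+1} + b_n P_n + a_n P_{n-1}`,
with `P_{-1} = 0`, `P_0 = 1`. -/
def HasTTRR (P : ℕ → Polynomial ℂ) (a b : ℕ → ℂ) : Prop :=
  P 0 = 1 ∧ X * P 0 = P 1 + C (b 0) * P 0 ∧
    ∀ n, 1 ≤ n → X * P n = P (n + 1) + C (b n) * P n + C (a n) * P (n - 1)

/-- Wronskian `W(p,q)(x) = p(x) q'(x) - p'(x) q(x)`. -/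
def Wr (p q : Polynomial ℂ) (x : ℂ) : ℂ :=
  p.eval x * (derivative q).eval x - (derivative p).eval x * q.eval x

/-- The monic Jacobi matrix with diagonal `b`, superdiagonal `1` and subdiagonal
entries `J_{n+1,n} = a_{n+1}`. -/
def jacobi (a b : ℕ → ℂ) (i j : ℕ) : ℂ :=
  if i = j then b i else if j = i + 1 then 1 else if i = j + 1 then a i else 0

/-- Entrywise product of semi-infinite (banded) matrices; the sum has finite support. -/
def mprod (A B : ℕ → ℕ → ℂ) (i j : ℕ) : ℂ := ∑' k, A i k * B k j

/-- `w` is the moment sequence of the inverse functional `u⁻¹`: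
the convolution of the moments of `u` and `w` is `(1,0,0,…)`. -/
def IsInverseMoments (u w : ℕ → ℂ) : Prop :=
  ∀ n, ∑ k ∈ Finset.range (n + 1), u k * w (n - k) = if n = 0 then 1 else 0

/-- Apply a functional `u` to the second (outer) variable `y` of a bivariate polynomial
`D = Σ_k q_k(x) y^k`, giving `Σ_k u_k q_k(x)`. -/
def fapplyY (u : ℕ → ℂ) (D : Polynomial (Polynomial ℂ)) : Polynomial ℂ :=
  D.sum fun k q => u k • q

/-!
The recurrence coefficients of monic orthogonal polynomials are read off two pieces of data: the
subleading coefficients, since `b_n` is the difference of those of `P_n` and `P_{n+1}`, and the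
numbers `K_n = ⟨u, P_n²⟩`, since `a_{n+1} = K_{n+1} / K_n`. For the Geronimus transformation the
expansion of `Q_n` shows that its subleading coefficient exceeds that of `P_n` by `α_{n,n-1}`, and
evaluating `⟨u, Q_{n+2} P_n⟩ = ⟨û, Q_{n+2} (x - c)² P_n⟩` in two ways gives
`α_{n+2,n} K_n = K̂_{n+2}`. Only `K̂_0 = û_0` and `K̂_1` remain, and `û_0 K̂_1` is the Hankel
determinant `û_0 û_2 - û_1²`.
-/

section MonicOrthogonal

variable {R : Type*} [CommRing R]

/-- A sequence of monic polynomials whose `n`-th term has degree `n`. -/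
structure IsMonicSequence (P : ℕ → R[X]) : Prop where
  monic (n : ℕ) : (P n).Monic
  natDegree_eq (n : ℕ) : (P n).natDegree = n

/-- The number `K_n = ⟨L, P_n²⟩` attached to a sequence of polynomials orthogonal with respect
to `L`. No positivity is assumed of `L`, so this is a norm only by analogy. -/
def sqNorm (L : R[X] →ₗ[R] R) (P : ℕ → R[X]) (n : ℕ) : R := L (P n * P n)

/-- `P` is the sequence of monic orthogonal polynomials of the linear functional `L`. -/
structure IsMonicOrthogonal (L : R[X] →ₗ[R] R) (P : ℕ → R[X]) : Prop
    extends IsMonicSequence P where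
  orthogonal {m n : ℕ} (h : m ≠ n) : L (P m * P n) = 0
  sqNorm_ne_zero (n : ℕ) : sqNorm L P n ≠ 0

/-- The three-term recurrence `x P_n = P_{n+1} + b_n P_n + a_n P_{n-1}` with `P_{-1} = 0`.
It is split into two cases to avoid truncated subtraction; the value `a 0` is irrelevant. -/
structure ThreeTermRecurrence (P : ℕ → R[X]) (a b : ℕ → R) : Prop where
  zero : X * P 0 = P 1 + C (b 0) * P 0
  succ (n : ℕ) : X * P (n + 1) = P (n + 2) + C (b (n + 1)) * P (n + 1) + C (a (n + 1)) * P n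

lemma apply_C_mul (L : R[X] →ₗ[R] R) (r : R) (p : R[X]) : L (C r * p) = r * L p := by
  rw [← smul_eq_C_mul, map_smul, smul_eq_mul]

namespace IsMonicSequence

variable {P Q : ℕ → R[X]}

lemma coeff_self (hP : IsMonicSequence P) (n : ℕ) : (P n).coeff n = 1 := by
  simpa [hP.natDegree_eq n] using (hP.monic n).coeff_natDegree

lemma coeff_of_lt (hP : IsMonicSequence P) {m n : ℕ} (h : n < m) : (P n).coeff m = 0 :=
  coeff_eq_zero_of_natDegree_lt ((hP.natDegree_eq n).trans_lt h)

lemma degree_lt (hP : IsMonicSequence P) {m n : ℕ} (h : m < n) : (P m).degree < n :=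
  (degree_le_of_natDegree_le (hP.natDegree_eq m).le).trans_lt (mod_cast h)

lemma apply_zero (hP : IsMonicSequence P) : P 0 = 1 :=
  (hP.monic 0).natDegree_eq_zero.mp (hP.natDegree_eq 0)

lemma sqNorm_zero (hP : IsMonicSequence P) (L : R[X] →ₗ[R] R) : sqNorm L P 0 = L 1 := by
  simp [sqNorm, hP.apply_zero]

lemma nextCoeff_zero (hP : IsMonicSequence P) : (P 0).nextCoeff = 0 := by
  simp [nextCoeff, hP.natDegree_eq]

lemma nextCoeff_succ (hP : IsMonicSequence P) (n : ℕ) :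
    (P (n + 1)).nextCoeff = (P (n + 1)).coeff n := by
  simp [nextCoeff, hP.natDegree_eq]

lemma nextCoeff_one_of_expansion (hP : IsMonicSequence P) (hQ : IsMonicSequence Q) {β : R}
    (h : Q 1 = P 1 + C β * P 0) : (Q 1).nextCoeff = (P 1).nextCoeff + β := by
  rw [hQ.nextCoeff_succ, hP.nextCoeff_succ, h]
  simp [hP.coeff_self]

lemma nextCoeff_add_two_of_expansion (hP : IsMonicSequence P) (hQ : IsMonicSequence Q) {n : ℕ}
    {β γ : R} (h : Q (n + 2) = P (n + 2) + C β * P (n + 1) + C γ * P n) :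
    (Q (n + 2)).nextCoeff = (P (n + 2)).nextCoeff + β := by
  rw [hQ.nextCoeff_succ, hP.nextCoeff_succ, h]
  simp [hP.coeff_self, hP.coeff_of_lt]

lemma degree_X_mul_sub_sub_lt (hP : IsMonicSequence P) (n : ℕ) :
    (X * P n - P (n + 1) - C ((P n).nextCoeff - (P (n + 1)).nextCoeff) * P n).degree <
      (n : WithBot ℕ) := by
  rw [degree_lt_iff_coeff_zero]
  intro m hm
  simp only [coeff_sub, coeff_C_mul, hP.nextCoeff_succ]
  cases m with
  | zero =>
    obtain rfl : n = 0 := Nat.le_zero.mp hm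
    simp [hP.nextCoeff_zero, hP.coeff_self]
  | succ m =>
    obtain rfl | rfl | hlt : n = m + 1 ∨ n = m ∨ n < m := by omega
    · simp [hP.nextCoeff_succ, hP.coeff_self]
    · simp [hP.coeff_self, hP.coeff_of_lt]
    · simp [hP.coeff_of_lt, hlt, hlt.trans m.lt_succ_self]

lemma span_image_Iio (hP : IsMonicSequence P) (n : ℕ) :
    Submodule.span R (P '' Set.Iio n) = degreeLT R n := by
  nontriviality R
  let S : Polynomial.Sequence R :=
    ⟨P, fun i ↦ by rw [degree_eq_natDegree (hP.monic i).ne_zero, hP.natDegree_eq i]⟩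
  exact S.span_degreeLT fun i _ ↦ (hP.monic i).leadingCoeff.symm ▸ isUnit_one

lemma eq_nextCoeff_sub (hP : IsMonicSequence P) {a b : ℕ → R} (h : ThreeTermRecurrence P a b)
    (n : ℕ) : b n = (P n).nextCoeff - (P (n + 1)).nextCoeff := by
  cases n with
  | zero =>
    have hcoeff := congrArg (coeff · 0) h.zero
    simp only [coeff_add, coeff_C_mul, coeff_X_mul_zero, hP.coeff_self] at hcoeff
    rw [hP.nextCoeff_zero, hP.nextCoeff_succ]
    linear_combination -hcoeff
  | succ n =>
    have hcoeff := congrArg (coeff · (n + 1)) (h.succ n)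
    simp only [coeff_add, coeff_C_mul, coeff_X_mul, hP.coeff_self,
      hP.coeff_of_lt n.lt_succ_self] at hcoeff
    rw [hP.nextCoeff_succ, hP.nextCoeff_succ]
    linear_combination -hcoeff

end IsMonicSequence

namespace IsMonicOrthogonal

variable {L : R[X] →ₗ[R] R} {P : ℕ → R[X]}

lemma apply_mul_eq_zero (hP : IsMonicOrthogonal L P) {n : ℕ} {p : R[X]} (hp : p.degree < n) :
    L (P n * p) = 0 := by
  have hspan : Submodule.span R (P '' Set.Iio n) ≤ (L ∘ₗ LinearMap.mulLeft R (P n)).ker := by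
    rw [Submodule.span_le]
    rintro _ ⟨m, hm, rfl⟩
    exact hP.orthogonal (Set.mem_Iio.mp hm).ne'
  exact hspan (hP.span_image_Iio n ▸ mem_degreeLT.mpr hp)

lemma apply_mul (hP : IsMonicOrthogonal L P) {n : ℕ} {p : R[X]} (hp : p.natDegree ≤ n) :
    L (P n * p) = p.coeff n * sqNorm L P n := by
  have hdeg : (p - C (p.coeff n) * P n).degree < n := by
    rw [degree_lt_iff_coeff_zero]
    intro m hm
    rcases hm.eq_or_lt with rfl | hm
    · simp [hP.coeff_self]
    · simp [coeff_eq_zero_of_natDegree_lt (hp.trans_lt hm), hP.coeff_of_lt hm]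
  have horth := hP.apply_mul_eq_zero hdeg
  rwa [mul_sub, mul_left_comm, map_sub, apply_C_mul, sub_eq_zero] at horth

lemma apply_mul_of_monic (hP : IsMonicOrthogonal L P) {p : R[X]} (hp : p.Monic) {n : ℕ}
    (hn : p.natDegree = n) : L (P n * p) = sqNorm L P n := by
  rw [hP.apply_mul hn.le, ← hn, hp.coeff_natDegree, one_mul]

lemma eq_zero_of_forall_apply_mul_eq_zero [NoZeroDivisors R] (hP : IsMonicOrthogonal L P) {n : ℕ}
    {p : R[X]} (hp : p.degree < n) (horth : ∀ k < n, L (P k * p) = 0) : p = 0 := by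
  by_contra hne
  have hlead := horth _ ((natDegree_lt_iff_degree_lt hne).mpr hp)
  rw [hP.apply_mul le_rfl, coeff_natDegree] at hlead
  exact mul_ne_zero (leadingCoeff_ne_zero.mpr hne) (hP.sqNorm_ne_zero _) hlead

lemma apply_mul_X_mul_succ (hP : IsMonicOrthogonal L P) {k n : ℕ} (hk : k ≤ n) :
    L (P k * (X * P (n + 1))) = (P k).coeff n * sqNorm L P (n + 1) := by
  have hdeg : (X * P k).natDegree ≤ n + 1 :=
    natDegree_mul_le.trans (by grw [natDegree_X_le, hP.natDegree_eq, hk, add_comm])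
  rw [show P k * (X * P (n + 1)) = P (n + 1) * (X * P k) by ring, hP.apply_mul hdeg, coeff_X_mul]

lemma mul_sqNorm_eq_sqNorm_succ (hP : IsMonicOrthogonal L P) {a b : ℕ → R}
    (h : ThreeTermRecurrence P a b) (n : ℕ) : a (n + 1) * sqNorm L P n = sqNorm L P (n + 1) := by
  have happly := hP.apply_mul_X_mul_succ (le_refl n)
  rw [sqNorm]
  simpa only [h.succ, mul_add, mul_left_comm (P n) (C _), map_add, apply_C_mul, hP.coeff_self,
    one_mul, hP.orthogonal (show n ≠ n + 1 by omega), hP.orthogonal (show n ≠ n + 2 by omega),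
    mul_zero, zero_add] using happly

lemma X_mul_succ_eq [NoZeroDivisors R] (hP : IsMonicOrthogonal L P) {n : ℕ} {a b : R}
    (hb : b = (P (n + 1)).nextCoeff - (P (n + 2)).nextCoeff)
    (ha : a * sqNorm L P n = sqNorm L P (n + 1)) :
    X * P (n + 1) = P (n + 2) + C b * P (n + 1) + C a * P n := by
  suffices hrem : X * P (n + 1) - P (n + 2) - C b * P (n + 1) - C a * P n = 0 by
    linear_combination hrem
  refine hP.eq_zero_of_forall_apply_mul_eq_zero (n := n + 1)
    ((degree_sub_le _ _).trans_lt (max_lt (hb ▸ hP.degree_X_mul_sub_sub_lt (n + 1)) ?_))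
    fun k hk ↦ ?_
  · rw [← smul_eq_C_mul]
    exact (degree_smul_le _ _).trans_lt (hP.degree_lt n.lt_succ_self)
  · have hPn : L (P k * P n) = (P k).coeff n * sqNorm L P n := by
      rw [mul_comm, hP.apply_mul ((hP.natDegree_eq k).trans_le (Nat.lt_succ_iff.mp hk))]
    simp only [mul_sub, mul_left_comm (P k) (C _), map_sub, apply_C_mul, hPn, ← ha,
      hP.apply_mul_X_mul_succ (Nat.lt_succ_iff.mp hk), hP.orthogonal hk.ne,
      hP.orthogonal (show k ≠ n + 2 by omega)]
    ring

lemma threeTermRecurrence_iff [NoZeroDivisors R] (hP : IsMonicOrthogonal L P) {a b : ℕ → R} :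
    ThreeTermRecurrence P a b ↔
      (∀ n, b n = (P n).nextCoeff - (P (n + 1)).nextCoeff) ∧
        ∀ n, a (n + 1) * sqNorm L P n = sqNorm L P (n + 1) := by
  refine ⟨fun h ↦ ⟨hP.eq_nextCoeff_sub h, hP.mul_sqNorm_eq_sqNorm_succ h⟩,
    fun ⟨hb, ha⟩ ↦ ⟨?_, fun n ↦ hP.X_mul_succ_eq (hb (n + 1)) (ha n)⟩⟩
  have hdeg := hP.degree_X_mul_sub_sub_lt 0
  rw [← hb, Nat.cast_zero, Nat.WithBot.lt_zero_iff, degree_eq_bot] at hdeg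
  linear_combination hdeg

lemma sqNorm_one_mul (hP : IsMonicOrthogonal L P) :
    sqNorm L P 1 * L 1 = L 1 * L (X ^ 2) - L X ^ 2 := by
  nontriviality R
  obtain ⟨d, hd⟩ : ∃ d, P 1 = X + C d :=
    ⟨_, (hP.monic 1).eq_X_add_C (hP.natDegree_eq 1)⟩
  have horth : L X + d * L 1 = 0 := by
    simpa [hd, hP.apply_zero, ← apply_C_mul] using hP.orthogonal one_ne_zero
  have hnorm : L (X ^ 2) + d * L X = sqNorm L P 1 := by
    rw [← hP.apply_mul_of_monic monic_X natDegree_X, hd, add_mul, map_add, apply_C_mul, sq]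
  linear_combination L X * horth - L 1 * hnorm

end IsMonicOrthogonal

section Geronimus

variable {L M : R[X] →ₗ[R] R} {P Q : ℕ → R[X]}

lemma apply_mul_eq_sqNorm_add (hP : IsMonicSequence P) (hQ : IsMonicOrthogonal M Q) {φ : R[X]}
    (hφ : φ.Monic) (hLM : ∀ p, L p = M (φ * p)) (n : ℕ) :
    L (P n * Q (n + φ.natDegree)) = sqNorm M Q (n + φ.natDegree) := by
  rw [hLM, ← mul_assoc, mul_comm, hQ.apply_mul_of_monic (hφ.mul (hP.monic n))]
  rw [hφ.natDegree_mul (hP.monic n), hP.natDegree_eq, add_comm]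

lemma mul_sqNorm_of_geronimus (hP : IsMonicOrthogonal L P) (hQ : IsMonicOrthogonal M Q)
    {c : R} (hLM : ∀ p, L p = M ((X - C c) ^ 2 * p)) {n : ℕ} {β γ : R}
    (h : Q (n + 2) = P (n + 2) + C β * P (n + 1) + C γ * P n) :
    γ * sqNorm L P n = sqNorm M Q (n + 2) := by
  nontriviality R
  have hdeg : ((X - C c) ^ 2).natDegree = 2 := by
    rw [(monic_X_sub_C c).natDegree_pow, natDegree_X_sub_C]
  have happly := apply_mul_eq_sqNorm_add hP.toIsMonicSequence hQ ((monic_X_sub_C c).pow 2) hLM n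
  rw [hdeg, h] at happly
  rw [sqNorm]
  simpa only [mul_add, mul_left_comm (P n) (C _), map_add, apply_C_mul, mul_zero, zero_add,
    hP.orthogonal (show n ≠ n + 1 by omega), hP.orthogonal (show n ≠ n + 2 by omega)] using happly

lemma sqNorm_one_mul_of_geronimus (hQ : IsMonicOrthogonal M Q) {c : R}
    (hLM : ∀ p, L p = M ((X - C c) ^ 2 * p)) :
    sqNorm M Q 1 * M 1 = L 1 * M 1 - (M X - c * M 1) ^ 2 := by
  have hL : L 1 = M (X ^ 2) - 2 * c * M X + c ^ 2 * M 1 := by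
    rw [hLM, ← apply_C_mul, ← apply_C_mul, ← map_sub, ← map_add]
    congr 1
    simp only [C_mul, C_pow, C_ofNat]
    ring
  rw [hQ.sqNorm_one_mul, hL]
  ring

lemma div_mul_mul_sqNorm_of_geronimus {K : Type*} [Field K] {L M : K[X] →ₗ[K] K} {P Q : ℕ → K[X]}
    (hP : IsMonicOrthogonal L P) (hQ : IsMonicOrthogonal M Q) {c : K}
    (hLM : ∀ p, L p = M ((X - C c) ^ 2 * p)) {a b : ℕ → K} (hrec : ThreeTermRecurrence P a b)
    {n : ℕ} {β γ β' γ' : K} (h : Q (n + 2) = P (n + 2) + C β * P (n + 1) + C γ * P n)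
    (h' : Q (n + 3) = P (n + 3) + C β' * P (n + 2) + C γ' * P (n + 1)) :
    γ' / γ * a (n + 1) * sqNorm M Q (n + 2) = sqNorm M Q (n + 3) := by
  have hKh := mul_sqNorm_of_geronimus hP hQ hLM h
  have hKh' := mul_sqNorm_of_geronimus hP hQ hLM h'
  have hγ : γ ≠ 0 := left_ne_zero_of_mul (hKh ▸ hQ.sqNorm_ne_zero (n + 2))
  rw [← hKh, ← hKh', ← hP.mul_sqNorm_eq_sqNorm_succ hrec]
  field_simp

end Geronimus

end MonicOrthogonal

section MomentFunctional

variable {R : Type*} [CommRing R]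

/-- The linear functional on polynomials with prescribed moments `⟨u, x^n⟩ = u n`. -/
def momentFunctional (u : ℕ → R) : R[X] →ₗ[R] R :=
  lsum fun n ↦ LinearMap.mulRight R (u n)

lemma momentFunctional_X_pow (u : ℕ → R) (n : ℕ) : momentFunctional u (X ^ n) = u n := by
  simp [momentFunctional, lsum_apply, X_pow_eq_monomial]

lemma momentFunctional_one (u : ℕ → R) : momentFunctional u 1 = u 0 := by
  simpa using momentFunctional_X_pow u 0

lemma momentFunctional_X (u : ℕ → R) : momentFunctional u X = u 1 := by
  simpa using momentFunctional_X_pow u 1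

lemma momentFunctional_eq_apply_X_sub_C_sq_mul {u v : ℕ → R} {c : R}
    (h : ∀ n, u n = v (n + 2) - 2 * c * v (n + 1) + c ^ 2 * v n) (p : R[X]) :
    momentFunctional u p = momentFunctional v ((X - C c) ^ 2 * p) := by
  induction p using Polynomial.induction_on' with
  | add p q hp hq => rw [mul_add, map_add, map_add, hp, hq]
  | monomial n r =>
    have hexpand : (X - C c) ^ 2 * (C r * X ^ n) =
        C r * (X ^ (n + 2) - C (2 * c) * X ^ (n + 1) + C (c ^ 2) * X ^ n) := by
      simp only [C_mul, C_pow, C_ofNat]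
      ring
    rw [← C_mul_X_pow_eq_monomial, hexpand]
    simp only [map_sub, map_add, apply_C_mul, momentFunctional_X_pow, h]

end MomentFunctional

lemma fapply_eq_momentFunctional (u : ℕ → ℂ) (p : ℂ[X]) : fapply u p = momentFunctional u p := by
  simp [fapply, momentFunctional, lsum_apply]

lemma IsSMOP.isMonicOrthogonal {u : ℕ → ℂ} {P : ℕ → ℂ[X]} (hP : IsSMOP u P) :
    IsMonicOrthogonal (momentFunctional u) P where
  monic := hP.1
  natDegree_eq := hP.2.1
  orthogonal {m n} h := fapply_eq_momentFunctional u _ ▸ hP.2.2.1 m n h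
  sqNorm_ne_zero n := by
    rw [sqNorm, ← fapply_eq_momentFunctional]
    exact hP.2.2.2 n

lemma HasTTRR.threeTermRecurrence {P : ℕ → ℂ[X]} {a b : ℕ → ℂ} (h : HasTTRR P a b) :
    ThreeTermRecurrence P a b :=
  ⟨h.2.1, fun n ↦ h.2.2 (n + 1) n.succ_pos⟩

lemma ThreeTermRecurrence.hasTTRR {P : ℕ → ℂ[X]} {a b : ℕ → ℂ} (h : ThreeTermRecurrence P a b)
    (hP : P 0 = 1) : HasTTRR P a b :=
  ⟨hP, h.zero, fun n hn ↦ by obtain ⟨m, rfl⟩ := Nat.exists_eq_add_of_le' hn; exact h.succ m⟩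

theorem stmt_3_general {K : Type*} [Field K] {u uh : ℕ → K} {c : K} {P Q : ℕ → K[X]}
    (hP : IsMonicOrthogonal (momentFunctional u) P) {a b : ℕ → K}
    (hrec : ThreeTermRecurrence P a b)
    (hrel : ∀ n, u n = uh (n + 2) - 2 * c * uh (n + 1) + c ^ 2 * uh n)
    (hQ : IsMonicOrthogonal (momentFunctional uh) Q) {α : ℕ → ℕ → K}
    (hQ1 : Q 1 = P 1 + C (α 1 0) * P 0)
    (hQn : ∀ n, Q (n + 2) = P (n + 2) + C (α (n + 2) (n + 1)) * P (n + 1) + C (α (n + 2) n) * P n)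
    {ah bh : ℕ → K}
    (hbh0 : bh 0 = b 0 - α 1 0)
    (hbh : ∀ n, bh (n + 1) = b (n + 1) + α (n + 1) n - α (n + 2) (n + 1))
    (hah1 : ah 1 = (u 0 * uh 0 - (uh 1 - c * uh 0) ^ 2) / uh 0 ^ 2)
    (hah2 : ah 2 = u 0 * uh 0 * α 2 0 / (u 0 * uh 0 - (uh 1 - c * uh 0) ^ 2))
    (hahn : ∀ n, ah (n + 3) = α (n + 3) (n + 1) / α (n + 2) n * a (n + 1)) :
    ThreeTermRecurrence Q ah bh := by
  have hLM := momentFunctional_eq_apply_X_sub_C_sq_mul hrel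
  have hnext (n : ℕ) : (Q (n + 1)).nextCoeff = (P (n + 1)).nextCoeff + α (n + 1) n := by
    cases n with
    | zero => exact hP.nextCoeff_one_of_expansion hQ.toIsMonicSequence hQ1
    | succ n => exact hP.nextCoeff_add_two_of_expansion hQ.toIsMonicSequence (hQn n)
  have hK0 : sqNorm (momentFunctional u) P 0 = u 0 := by
    rw [hP.sqNorm_zero, momentFunctional_one]
  have hKh0 : sqNorm (momentFunctional uh) Q 0 = uh 0 := by
    rw [hQ.sqNorm_zero, momentFunctional_one]
  have hKh1 : sqNorm (momentFunctional uh) Q 1 * uh 0 = u 0 * uh 0 - (uh 1 - c * uh 0) ^ 2 := by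
    simpa only [momentFunctional_one, momentFunctional_X] using sqNorm_one_mul_of_geronimus hQ hLM
  have hKh1_ne := hQ.sqNorm_ne_zero 1
  have huh0 : uh 0 ≠ 0 := hKh0 ▸ hQ.sqNorm_ne_zero 0
  refine hQ.threeTermRecurrence_iff.mpr ⟨fun n ↦ ?_, fun n ↦ ?_⟩
  · cases n with
    | zero =>
      rw [hbh0, hP.eq_nextCoeff_sub hrec, hnext, hP.nextCoeff_zero, hQ.nextCoeff_zero]
      ring
    | succ n =>
      rw [hbh, hP.eq_nextCoeff_sub hrec, hnext, hnext]
      ring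
  · match n with
    | 0 =>
      rw [hah1, ← hKh1, hKh0]
      field_simp
    | 1 =>
      rw [hah2, ← hKh1, ← mul_sqNorm_of_geronimus hP hQ hLM (hQn 0), hK0]
      field_simp
    | n + 2 =>
      rw [hahn]
      exact div_mul_mul_sqNorm_of_geronimus hP hQ hLM hrec (hQn n) (hQn (n + 1))

/-- three term recurrence coefficients of the SMOP `(Q_n)` of a quadratic
Geronimus transformation `u = (x-c)² û`, in terms of the connection coefficients `α` of
the expansion `Q_n = P_n + α_{n,n-1} P_{n-1} + α_{n,n-2} P_{n-2}`. -/
theorem stmt_3 (u : ℕ → ℂ) (c : ℂ) (P : ℕ → Polynomial ℂ) (hP : IsSMOP u P)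
    (a b : ℕ → ℂ) (hrec : HasTTRR P a b) (ha : ∀ n, 1 ≤ n → a n ≠ 0)
    (uh : ℕ → ℂ)
    (hrel : ∀ n, u n = uh (n + 2) - 2 * c * uh (n + 1) + c ^ 2 * uh n)
    (Q : ℕ → Polynomial ℂ) (hQ : IsSMOP uh Q)
    (α : ℕ → ℕ → ℂ)
    (hQ0 : Q 0 = P 0)
    (hQ1 : Q 1 = P 1 + C (α 1 0) * P 0)
    (hQn : ∀ n, 2 ≤ n → Q n = P n + C (α n (n - 1)) * P (n - 1) + C (α n (n - 2)) * P (n - 2))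
    (bh ah : ℕ → ℂ)
    (hbh0 : bh 0 = b 0 - α 1 0)
    (hbh : ∀ n, 1 ≤ n → bh n = b n + α n (n - 1) - α (n + 1) n)
    (hah1 : ah 1 = (u 0 * uh 0 - (uh 1 - c * uh 0) ^ 2) / (uh 0) ^ 2)
    (hah2 : ah 2 = u 0 * uh 0 * α 2 0 / (u 0 * uh 0 - (uh 1 - c * uh 0) ^ 2))
    (hahn : ∀ n, 3 ≤ n → ah n = α n (n - 2) / α (n - 1) (n - 3) * a (n - 2)) :
    HasTTRR Q ah bh := by
  exact (stmt_3_general hP.isMonicOrthogonal hrec.threeTermRecurrence hrel hQ.isMonicOrthogonal hQ1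
    (fun n ↦ hQn (n + 2) le_add_self) hbh0 (fun n ↦ hbh (n + 1) le_add_self) hah1 hah2
    (fun n ↦ hahn (n + 3) le_add_self)).hasTTRR hQ.isMonicOrthogonal.apply_zero
end
end

section
/- Let u be quasi-definite with SMOP (P_n) and recurrence coefficients (a_n, b_n); suppose u^{-1} is quasi-definite with SMOP (P^−_n), and assume W(P_n,P_{n−1})(0) ≠ 0 for n ≥ 2 and W(P^−_n,P^−_{n+1})(0) ≠ 0 for n ≥ 0. Let J^{(1)} be the monic Jacobi matrix of the associated polynomials of the first kind (diagonal b_{n+1}, subdiagonal a_{n+2}, superdiagonal 1) and J^− the monic Jacobi matrix of (P^−_n). Define the semi-infinite matrices L (L_{n,n} = 1, L_{n,n−1} = α_{n,n−1} = −W(P_{n+1},P_{n−1})(0)/W(P_n,P_{n−1})(0), L_{n,n−2} = α_{n,n−2} = W(P_{n+1},P_n)(0)/W(P_n,P_{n−1})(0), zero elsewhere) and U (U_{n,n} = β_{n,n} = W(P^−_{n+1},P^−_{n+2})(0)/W(P^−_n,P^−_{n+1})(0), U_{n,n+1} = β_{n,n+1} = −W(P^−_n,P^−_{n+2})(0)/W(P^−_n,P^−_{n+1})(0),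 U_{n,n+2} = 1, zero elsewhere). Then, entrywise, (J^{(1)})² = U·L and (J^−)² = L·U. -/
open Polynomial

noncomputable section

/-- Lower matrix: `L_{n,n} = 1`, `L_{n,n-1} = -W(P_{n+1},P_{n-1})(0)/W(P_n,P_{n-1})(0)`,
`L_{n,n-2} = W(P_{n+1},P_n)(0)/W(P_n,P_{n-1})(0)`. -/
def Lmat9 (P : ℕ → Polynomial ℂ) (i j : ℕ) : ℂ :=
  if i = j then 1
    else if i = j + 1 then -(Wr (P (i + 1)) (P (i - 1)) 0) / Wr (P i) (P (i - 1)) 0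
      else if i = j + 2 then Wr (P (i + 1)) (P i) 0 / Wr (P i) (P (i - 1)) 0
        else 0

/-- Upper matrix: `U_{n,n} = W(P⁻_{n+1},P⁻_{n+2})(0)/W(P⁻_n,P⁻_{n+1})(0)`,
`U_{n,n+1} = -W(P⁻_n,P⁻_{n+2})(0)/W(P⁻_n,P⁻_{n+1})(0)`, `U_{n,n+2} = 1`. -/
def Umat9 (Pm : ℕ → Polynomial ℂ) (i j : ℕ) : ℂ :=
  if j = i then Wr (Pm (i + 1)) (Pm (i + 2)) 0 / Wr (Pm i) (Pm (i + 1)) 0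
    else if j = i + 1 then -(Wr (Pm i) (Pm (i + 2)) 0) / Wr (Pm i) (Pm (i + 1)) 0
      else if j = i + 2 then 1 else 0

/-!
Let `T p = u_y ((p(x) - p(y)) / (x - y))`. The convolution identity between the moments of `u` and
`u⁻¹` says exactly that `⟨u⁻¹, T p⟩ = p'(0)`, and `T (x ^ j * p) = x ^ j * T p` as long as `p` is
orthogonal to all degrees below `j`. So if a combination of `P (n + 2)`, `P (n + 1)`, `P n` has a
double zero at the origin, its image under `T` is orthogonal for `u⁻¹` and therefore a multiple of
`P⁻ (n + 1)`; and `x ^ 2` times the associated polynomial `R n = T (P (n + 1)) / u 0` is orthogonal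
for `u⁻¹` to all degrees below `n`, hence a combination of `P⁻ (n + 2)`, `P⁻ (n + 1)`, `P⁻ n` with a
double zero at the origin. Cramer's rule turns the two double zeros into the Wronskian quotients:
`L R = P⁻` and `U P⁻ = x ^ 2 R`. Since `J⁽¹⁾ R = x R` and `J⁻ P⁻ = x P⁻`, both factorizations follow
by letting the matrices act on the bases `R` and `P⁻`.
-/

/-! ### Linear functionals and difference quotients -/

section DifferenceQuotient

variable {R : Type*} [CommRing R]

/-- The difference quotient `p ↦ F_y ((p(x) - p(y)) / (x - y))` of a linear functional `F`, given on
the monomial basis by `(x ^ m - y ^ m) / (x - y) = ∑ k < m, y ^ k * x ^ (m - 1 - k)`. -/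
def differenceQuotient (F : R[X] →ₗ[R] R) : R[X] →ₗ[R] R[X] :=
  lsum fun m => LinearMap.toSpanSingleton R R[X]
    (∑ k ∈ Finset.range m, F (X ^ k) • X ^ (m - 1 - k))

/-- The polynomials orthogonal with respect to `F` to all polynomials of degree less than `n`. -/
def orthogonalBelow (F : R[X] →ₗ[R] R) (n : ℕ) : Submodule R R[X] :=
  ⨅ j ∈ Finset.range n, LinearMap.ker (F ∘ₗ LinearMap.mulLeft R (X ^ j))

variable {F : R[X] →ₗ[R] R}

lemma mem_orthogonalBelow {n : ℕ} {p : R[X]} :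
    p ∈ orthogonalBelow F n ↔ ∀ j < n, F (X ^ j * p) = 0 := by
  simp [orthogonalBelow]

lemma orthogonalBelow_anti : Antitone (orthogonalBelow F) := fun _ _ hmn _ hp =>
  mem_orthogonalBelow.2 fun j hj => mem_orthogonalBelow.1 hp j (hj.trans_le hmn)

lemma apply_mul_eq_zero_of_mem_orthogonalBelow {n : ℕ} {p q : R[X]}
    (hp : p ∈ orthogonalBelow F n) (hq : q.degree < n) : F (q * p) = 0 := by
  have hq' := sum_fin (fun j c => C c * X ^ j) (by simp) hq
  rw [← q.sum_C_mul_X_pow_eq, ← hq', Finset.sum_mul, map_sum]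
  refine Finset.sum_eq_zero fun j _ => ?_
  rw [mul_assoc, ← smul_eq_C_mul, map_smul, mem_orthogonalBelow.1 hp j j.2, smul_zero]

lemma differenceQuotient_X_pow (m : ℕ) :
    differenceQuotient F (X ^ m) = ∑ k ∈ Finset.range m, F (X ^ k) • X ^ (m - 1 - k) := by
  simp [differenceQuotient, lsum, ← monomial_one_right_eq_X_pow]

lemma differenceQuotient_C (c : R) : differenceQuotient F (C c) = 0 := by
  simp [differenceQuotient, lsum]

lemma differenceQuotient_X_mul (p : R[X]) :
    differenceQuotient F (X * p) = X * differenceQuotient F p + C (F p) := by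
  suffices h : differenceQuotient F ∘ₗ LinearMap.mulLeft R X
      = LinearMap.mulLeft R X ∘ₗ differenceQuotient F + Algebra.linearMap R R[X] ∘ₗ F from
    LinearMap.congr_fun h p
  ext m : 2
  have hshift : ∀ k ∈ Finset.range m,
      C (F (X ^ k)) * X ^ (m - k) = X * (C (F (X ^ k)) * X ^ (m - 1 - k)) := fun k hk => by
    rw [mul_left_comm, ← pow_succ', show m - k = m - 1 - k + 1 by grind]
  simpa [monomial_one_right_eq_X_pow, ← pow_succ', differenceQuotient_X_pow, Finset.sum_range_succ,
    Finset.mul_sum, smul_eq_C_mul] using Finset.sum_congr rfl hshift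

lemma differenceQuotient_X_pow_mul {p : R[X]} {n : ℕ} (hp : p ∈ orthogonalBelow F n) :
    differenceQuotient F (X ^ n * p) = X ^ n * differenceQuotient F p := by
  induction n with
  | zero => simp
  | succ n ih =>
    rw [pow_succ', mul_assoc, differenceQuotient_X_mul, ih (orthogonalBelow_anti n.le_succ hp),
      mem_orthogonalBelow.1 hp n n.lt_succ_self, C_0, add_zero, mul_assoc]

lemma coeff_differenceQuotient (p : R[X]) (k : ℕ) :
    (differenceQuotient F p).coeff k = F (divX^[k + 1] p) := by
  have hrec (q : R[X]) :
      differenceQuotient F q = X * differenceQuotient F q.divX + C (F q.divX) := by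
    conv_lhs => rw [← q.X_mul_divX_add, map_add, differenceQuotient_C, add_zero,
      differenceQuotient_X_mul]
  induction k generalizing p with
  | zero => rw [hrec]; simp
  | succ k ih => rw [hrec, coeff_add, coeff_X_mul, ih, coeff_C_succ, add_zero]; rfl

lemma coeff_iterate_divX (p : R[X]) (k m : ℕ) : (divX^[k] p).coeff m = p.coeff (m + k) := by
  induction k generalizing p with
  | zero => rfl
  | succ k ih => rw [Function.iterate_succ_apply, ih, coeff_divX, add_assoc]

lemma natDegree_differenceQuotient_le {p : R[X]} {n : ℕ} (hp : p.natDegree ≤ n + 1) :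
    (differenceQuotient F p).natDegree ≤ n := by
  refine natDegree_le_iff_coeff_eq_zero.2 fun k hk => ?_
  have hdivX : divX^[k + 1] p = 0 := by
    ext m
    rw [coeff_iterate_divX, coeff_zero, coeff_eq_zero_of_natDegree_lt (by lia)]
  rw [coeff_differenceQuotient, hdivX, map_zero]

lemma coeff_differenceQuotient_of_natDegree_le {p : R[X]} {n : ℕ} (hp : p.natDegree ≤ n + 1) :
    (differenceQuotient F p).coeff n = p.coeff (n + 1) * F 1 := by
  have hdivX : divX^[n + 1] p = C (p.coeff (n + 1)) := by
    ext m
    rw [coeff_iterate_divX, coeff_C]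
    split_ifs with hm
    · rw [hm, zero_add]
    · exact coeff_eq_zero_of_natDegree_lt (by lia)
  rw [coeff_differenceQuotient, hdivX, ← mul_one (C _), ← smul_eq_C_mul, map_smul, smul_eq_mul]

end DifferenceQuotient

/-! ### Orthogonal sequences -/

section Orthogonal

variable {K : Type*} [Field K] {F : K[X] →ₗ[K] K} {S : Polynomial.Sequence K}

lemma eq_sum_range_of_orthogonal (hS : Pairwise fun i j => F (S i * S j) = 0)
    (hne : ∀ i, F (S i * S i) ≠ 0) {p : K[X]} {m : ℕ} (hp : p.degree < m) :
    p = ∑ j ∈ Finset.range m, (F (S j * p) / F (S j * S j)) • S j := by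
  have hspan : p ∈ Submodule.span K (S '' Set.Iio m) := by
    rw [S.span_degreeLT fun i _ => by simp]
    exact mem_degreeLT.2 hp
  clear hp
  induction hspan using Submodule.span_induction with
  | mem q hq =>
    obtain ⟨i, hi, rfl⟩ := hq
    rw [Finset.sum_eq_single_of_mem i (by simpa using hi)
      fun j _ hji => by rw [hS hji, zero_div, zero_smul], div_self (hne i), one_smul]
  | zero => simp
  | add q r _ _ hq hr =>
    conv_lhs => rw [hq, hr]
    simp only [mul_add, map_add, add_div, add_smul, Finset.sum_add_distrib]
  | smul c q _ hq =>
    conv_lhs => rw [hq]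
    simp only [mul_smul_comm, map_smul, smul_eq_mul, mul_div_assoc, mul_smul,
      Finset.smul_sum]

lemma mem_orthogonalBelow_of_orthogonal (hS : Pairwise fun i j => F (S i * S j) = 0)
    (hne : ∀ i, F (S i * S i) ≠ 0) (n : ℕ) : S n ∈ orthogonalBelow F n := by
  refine mem_orthogonalBelow.2 fun j hj => ?_
  have hdeg : (X ^ j : K[X]).degree < n := by simpa using hj
  rw [eq_sum_range_of_orthogonal hS hne hdeg, Finset.sum_mul, map_sum]
  refine Finset.sum_eq_zero fun i hi => ?_
  rw [smul_mul_assoc, map_smul, hS (Finset.mem_range.1 hi).ne, smul_zero]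

lemma eq_sum_Ico_of_mem_orthogonalBelow (hS : Pairwise fun i j => F (S i * S j) = 0)
    (hne : ∀ i, F (S i * S i) ≠ 0) {p : K[X]} {n m : ℕ} (hnm : n ≤ m)
    (hp : p ∈ orthogonalBelow F n) (hdeg : p.degree < m) :
    p = ∑ j ∈ Finset.Ico n m, (F (S j * p) / F (S j * S j)) • S j := by
  have hlow : ∑ j ∈ Finset.range n, (F (S j * p) / F (S j * S j)) • S j = 0 :=
    Finset.sum_eq_zero fun j hj => by
      have hj' : (S j).degree < n := by simpa using hj
      rw [apply_mul_eq_zero_of_mem_orthogonalBelow hp hj', zero_div, zero_smul]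
  conv_lhs => rw [eq_sum_range_of_orthogonal hS hne hdeg, ← Finset.sum_range_add_sum_Ico _ hnm,
    hlow, zero_add]

end Orthogonal

/-! ### Orthogonal polynomials of a functional and of its inverse -/

/-- The linear functional with moments `u`, as a bundled map. -/
def functional (u : ℕ → ℂ) : ℂ[X] →ₗ[ℂ] ℂ :=
  lsum fun k => LinearMap.toSpanSingleton ℂ ℂ (u k)

lemma functional_apply (u : ℕ → ℂ) (p : ℂ[X]) : functional u p = fapply u p := rfl

lemma functional_X_pow (u : ℕ → ℂ) (n : ℕ) : functional u (X ^ n) = u n := by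
  simp [functional, lsum, ← monomial_one_right_eq_X_pow]

lemma functional_one (u : ℕ → ℂ) : functional u 1 = u 0 := by
  simpa using functional_X_pow u 0

section InverseFunctional

variable {u w : ℕ → ℂ}

lemma IsInverseMoments.functional_differenceQuotient (h : IsInverseMoments u w) (p : ℂ[X]) :
    functional w (differenceQuotient (functional u) p) = p.coeff 1 := by
  suffices hlin : functional w ∘ₗ differenceQuotient (functional u) = lcoeff ℂ 1 from
    LinearMap.congr_fun hlin p
  ext m
  cases m with
  | zero => simpa [coeff_one] using
      congrArg (functional w) (differenceQuotient_X_pow (F := functional u) 0)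
  | succ m =>
    simpa [monomial_one_right_eq_X_pow, differenceQuotient_X_pow, functional_X_pow, coeff_X_pow,
      @eq_comm _ 0] using h m

/- On `X ^ j * p` with `p` orthogonal below `j`, the difference quotient pulls out `X ^ j`, and
`u⁻¹` of what is left is the coefficient of `X ^ j * p` at `X`. -/
lemma IsInverseMoments.functional_X_pow_mul_differenceQuotient (h : IsInverseMoments u w)
    {p : ℂ[X]} {j : ℕ} (hp : p ∈ orthogonalBelow (functional u) j) (hX : X ^ 2 ∣ X ^ j * p) :
    functional w (X ^ j * differenceQuotient (functional u) p) = 0 := by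
  rw [← differenceQuotient_X_pow_mul hp, h.functional_differenceQuotient,
    X_pow_dvd_iff.1 hX 1 one_lt_two]

lemma IsInverseMoments.differenceQuotient_mem_orthogonalBelow (h : IsInverseMoments u w)
    {p : ℂ[X]} {n : ℕ} (hp : p ∈ orthogonalBelow (functional u) n) (hX : X ^ 2 ∣ p) :
    differenceQuotient (functional u) p ∈ orthogonalBelow (functional w) (n + 1) :=
  mem_orthogonalBelow.2 fun _ hj => h.functional_X_pow_mul_differenceQuotient
    (orthogonalBelow_anti (Nat.lt_succ_iff.1 hj) hp) (hX.mul_left _)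

lemma IsInverseMoments.X_sq_mul_differenceQuotient_mem_orthogonalBelow
    (h : IsInverseMoments u w) {p : ℂ[X]} {n : ℕ}
    (hp : p ∈ orthogonalBelow (functional u) (n + 1)) :
    X ^ 2 * differenceQuotient (functional u) p ∈ orthogonalBelow (functional w) n :=
  mem_orthogonalBelow.2 fun j hj => by
    rw [← mul_assoc, ← pow_add]
    exact h.functional_X_pow_mul_differenceQuotient (orthogonalBelow_anti (by lia) hp)
      (dvd_mul_of_dvd_left (pow_dvd_pow X (by lia)) p)

end InverseFunctional

section SMOP

variable {u : ℕ → ℂ} {P : ℕ → ℂ[X]}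

/-- A SMOP as a polynomial sequence in the sense of Mathlib. -/
def IsSMOP.sequence (hP : IsSMOP u P) : Polynomial.Sequence ℂ where
  elems' := P
  degree_eq' n := by rw [degree_eq_natDegree (hP.1 n).ne_zero, hP.2.1 n]

lemma IsSMOP.linearIndependent (hP : IsSMOP u P) : LinearIndependent ℂ P :=
  hP.sequence.linearIndependent

lemma IsSMOP.coeff_self (hP : IsSMOP u P) (n : ℕ) : (P n).coeff n = 1 := by
  simpa [Monic, leadingCoeff, hP.2.1 n] using hP.1 n

lemma IsSMOP.eq_one (hP : IsSMOP u P) : P 0 = 1 :=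
  (hP.1 0).natDegree_eq_zero.1 (hP.2.1 0)

lemma IsSMOP.moment_zero_ne_zero (hP : IsSMOP u P) : u 0 ≠ 0 := by
  simpa [hP.eq_one, ← functional_apply, functional_one] using hP.2.2.2 0

protected lemma IsSMOP.mem_orthogonalBelow (hP : IsSMOP u P) (n : ℕ) :
    P n ∈ orthogonalBelow (functional u) n :=
  mem_orthogonalBelow_of_orthogonal (S := hP.sequence) (hP.2.2.1 · ·) hP.2.2.2 n

lemma IsSMOP.eq_sum_Ico (hP : IsSMOP u P) {p : ℂ[X]} {n m : ℕ} (hnm : n ≤ m)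
    (hp : p ∈ orthogonalBelow (functional u) n) (hdeg : p.natDegree < m) :
    p = ∑ j ∈ Finset.Ico n m, (functional u (P j * p) / functional u (P j * P j)) • P j :=
  eq_sum_Ico_of_mem_orthogonalBelow (S := hP.sequence) (hP.2.2.1 · ·) hP.2.2.2 hnm hp
    ((degree_lt_iff_coeff_zero ..).2 fun _ h => coeff_eq_zero_of_natDegree_lt (hdeg.trans_le h))

lemma IsSMOP.eq_coeff_smul_of_mem_orthogonalBelow (hP : IsSMOP u P) {p : ℂ[X]} {n : ℕ}
    (hp : p ∈ orthogonalBelow (functional u) n) (hdeg : p.natDegree ≤ n) :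
    p = p.coeff n • P n := by
  obtain ⟨c, hc⟩ : ∃ c : ℂ, p = c • P n :=
    ⟨_, by simpa using hP.eq_sum_Ico n.le_succ hp (Nat.lt_succ_iff.2 hdeg)⟩
  rw [hc, coeff_smul, hP.coeff_self, smul_eq_mul, mul_one]

lemma IsSMOP.exists_eq_add_of_mem_orthogonalBelow (hP : IsSMOP u P) {p : ℂ[X]} {n : ℕ}
    (hp : p ∈ orthogonalBelow (functional u) n) (hdeg : p.natDegree ≤ n + 2) :
    ∃ α β : ℂ, p = p.coeff (n + 2) • P (n + 2) + α • P (n + 1) + β • P n := by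
  obtain ⟨α, β, γ, h⟩ : ∃ α β γ : ℂ, p = β • P n + α • P (n + 1) + γ • P (n + 2) :=
    ⟨_, _, _, by simpa [Finset.sum_Ico_succ_top] using
      hP.eq_sum_Ico (by lia : n ≤ n + 3) hp (Nat.lt_succ_iff.2 hdeg)⟩
  have hγ : p.coeff (n + 2) = γ := by
    have hvanish (i) (hi : i < n + 2) : (P i).coeff (n + 2) = 0 :=
      coeff_eq_zero_of_natDegree_lt (by rwa [hP.2.1])
    simp [h, hP.coeff_self, hvanish n, hvanish (n + 1)]
  exact ⟨α, β, by rw [hγ]; nth_rw 1 [h]; abel⟩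

end SMOP

/-! ### Polynomials with a double zero at the origin -/

section DoubleZero

lemma Wr_swap (p q : ℂ[X]) (x : ℂ) : Wr p q x = -Wr q p x := by
  unfold Wr
  ring

lemma X_sq_dvd_iff {q : ℂ[X]} : X ^ 2 ∣ q ↔ q.eval 0 = 0 ∧ (derivative q).eval 0 = 0 := by
  simp [X_pow_dvd_iff, Nat.le_one_iff_eq_zero_or_eq_one, forall_eq_or_imp,
    ← coeff_zero_eq_eval_zero, coeff_derivative]

/- Cramer's rule for the two linear equations that express the double zero. -/
lemma X_sq_dvd_add_smul_add_smul_iff {p q r : ℂ[X]} (hW : Wr p q 0 ≠ 0) {α β : ℂ} :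
    X ^ 2 ∣ r + α • q + β • p ↔ α = -(Wr p r 0) / Wr p q 0 ∧ β = Wr q r 0 / Wr p q 0 := by
  rw [X_sq_dvd_iff, eq_div_iff hW, eq_div_iff hW]
  simp only [eval_add, eval_smul, derivative_add, derivative_smul, smul_eq_mul]
  constructor
  · rintro ⟨h₀, h₁⟩
    unfold Wr
    constructor
    · linear_combination p.eval 0 * h₁ - (derivative p).eval 0 * h₀
    · linear_combination (derivative q).eval 0 * h₀ - q.eval 0 * h₁
  · rintro ⟨hα, hβ⟩
    constructor <;> refine mul_right_cancel₀ hW ?_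
    · unfold Wr at *
      linear_combination q.eval 0 * hα + p.eval 0 * hβ
    · unfold Wr at *
      linear_combination (derivative q).eval 0 * hα + (derivative p).eval 0 * hβ

end DoubleZero

/-! ### Row-finite matrices acting on sequences of vectors -/

/-- Every row of `A` has finitely many nonzero entries. -/
def RowFinite {R ι κ : Type*} [Zero R] (A : ι → κ → R) : Prop :=
  ∀ i, (A i).HasFiniteSupport

namespace RowFinite

section Act

variable {R M ι κ : Type*} [CommSemiring R] [AddCommMonoid M] [Module R M] {A B : ι → κ → R}

/-- The product `A f` of a row-finite matrix with a column of vectors. -/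
def act (hA : RowFinite A) (f : κ → M) (i : ι) : M :=
  Finsupp.linearCombination R f (Finsupp.ofSupportFinite (A i) (hA i))

lemma act_apply_eq_sum (hA : RowFinite A) (f : κ → M) {i : ι} {s : Finset κ}
    (hs : ∀ j ∉ s, A i j = 0) : hA.act f i = ∑ j ∈ s, A i j • f j := by
  rw [act, Finsupp.linearCombination_apply]
  refine Finsupp.sum_of_support_subset _ (fun j hj => ?_) _ fun _ _ => zero_smul R _
  by_contra hjs
  exact Finsupp.mem_support_iff.1 hj (hs j hjs)

lemma map_act {N : Type*} [AddCommMonoid N] [Module R N] (hA : RowFinite A) (φ : M →ₗ[R] N)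
    (f : κ → M) (i : ι) : φ (hA.act f i) = hA.act (φ ∘ f) i :=
  Finsupp.apply_linearCombination R φ f _

lemma act_mul_left {S : Type*} [Semiring S] [Algebra R S] (hA : RowFinite A) (q : S) (f : κ → S) :
    hA.act (fun j => q * f j) = fun i => q * hA.act f i :=
  funext fun i => (hA.map_act (LinearMap.mulLeft R q) f i).symm

lemma eq_of_act_eq (hA : RowFinite A) (hB : RowFinite B) {f : κ → M}
    (hf : LinearIndependent R f) (h : hA.act f = hB.act f) : A = B := by
  funext i
  exact congrArg DFunLike.coe (hf (congrFun h i))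

end Act

section Product

variable {M : Type*} [AddCommMonoid M] [Module ℂ M] {A B A' B' : ℕ → ℕ → ℂ}

lemma mprod_apply (hA : RowFinite A) (hB : RowFinite B) (i : ℕ) :
    mprod A B i = hA.act (fun k => Finsupp.ofSupportFinite (B k) (hB k)) i := by
  funext j
  rw [act, Finsupp.linearCombination_apply, Finsupp.sum_apply]
  exact tsum_eq_sum fun k hk => by
    rw [show A i k = 0 from Finsupp.notMem_support_iff.1 hk, zero_mul]

protected lemma mprod (hA : RowFinite A) (hB : RowFinite B) : RowFinite (mprod A B) := fun i => by
  rw [hA.mprod_apply hB]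
  exact Finsupp.hasFiniteSupport _

lemma act_mprod (hA : RowFinite A) (hB : RowFinite B) (f : ℕ → M) :
    (hA.mprod hB).act f = hA.act (hB.act f) := by
  funext i
  have hrow : Finsupp.ofSupportFinite _ (hA.mprod hB i)
      = hA.act (fun k => Finsupp.ofSupportFinite (B k) (hB k)) i :=
    DFunLike.coe_injective (hA.mprod_apply hB i)
  rw [act, hrow, map_act]
  rfl

lemma mprod_eq_mprod (hA : RowFinite A) (hB : RowFinite B) (hA' : RowFinite A')
    (hB' : RowFinite B') {f : ℕ → M} (hf : LinearIndependent ℂ f)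
    (h : hA.act (hB.act f) = hA'.act (hB'.act f)) : mprod A B = mprod A' B' :=
  (hA.mprod hB).eq_of_act_eq (hA'.mprod hB') hf (by rw [hA.act_mprod hB, hA'.act_mprod hB', h])

end Product

end RowFinite

section Banded

variable {Q : ℕ → ℂ[X]} {a b : ℕ → ℂ}

lemma rowFinite_of_add_lt {R : Type*} [Zero R] {A : ℕ → ℕ → R} (d : ℕ)
    (h : ∀ i j, i + d < j → A i j = 0) : RowFinite A := fun i =>
  (Set.finite_Iic (i + d)).subset fun j hj => not_lt.1 fun hij => hj (h i j hij)

lemma rowFinite_jacobi (a b : ℕ → ℂ) : RowFinite (jacobi a b) :=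
  rowFinite_of_add_lt 1 fun i j _ => by grind [jacobi]

lemma rowFinite_Lmat9 (Q : ℕ → ℂ[X]) : RowFinite (Lmat9 Q) :=
  rowFinite_of_add_lt 0 fun i j _ => by grind [Lmat9]

lemma rowFinite_Umat9 (Q : ℕ → ℂ[X]) : RowFinite (Umat9 Q) :=
  rowFinite_of_add_lt 2 fun i j _ => by grind [Umat9]

lemma HasTTRR.act_jacobi (h : HasTTRR Q a b) :
    (rowFinite_jacobi a b).act Q = fun n => X * Q n := by
  obtain ⟨-, h₀, hsucc⟩ := h
  funext n
  cases n with
  | zero =>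
    rw [RowFinite.act_apply_eq_sum _ _ (s := {0, 1}) (by grind [jacobi]), h₀]
    simp [jacobi, smul_eq_C_mul, add_comm]
  | succ n =>
    rw [RowFinite.act_apply_eq_sum _ _ (s := {n, n + 1, n + 2}) (by grind [jacobi]),
      hsucc _ n.succ_pos]
    simp [jacobi, smul_eq_C_mul, add_comm, add_left_comm]

lemma HasTTRR.act_jacobi_act_jacobi (h : HasTTRR Q a b) :
    (rowFinite_jacobi a b).act ((rowFinite_jacobi a b).act Q) = fun n => X ^ 2 * Q n := by
  simp only [h.act_jacobi, RowFinite.act_mul_left, sq, mul_assoc]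

lemma act_Umat9 {M : Type*} [AddCommMonoid M] [Module ℂ M] (Q : ℕ → ℂ[X]) (f : ℕ → M) (n : ℕ) :
    (rowFinite_Umat9 Q).act f n
      = f (n + 2) + Umat9 Q n (n + 1) • f (n + 1) + Umat9 Q n n • f n := by
  rw [RowFinite.act_apply_eq_sum _ _ (s := {n, n + 1, n + 2}) (by grind [Umat9])]
  simp [Umat9, add_comm, add_left_comm]

lemma X_sq_dvd_iff_eq_Umat9 {n : ℕ} (hW : Wr (Q n) (Q (n + 1)) 0 ≠ 0) {α β : ℂ} :
    X ^ 2 ∣ Q (n + 2) + α • Q (n + 1) + β • Q n ↔ α = Umat9 Q n (n + 1) ∧ β = Umat9 Q n n := by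
  rw [X_sq_dvd_add_smul_add_smul_iff hW]
  simp [Umat9]

lemma act_Lmat9_zero {M : Type*} [AddCommMonoid M] [Module ℂ M] (Q : ℕ → ℂ[X]) (f : ℕ → M) :
    (rowFinite_Lmat9 Q).act f 0 = f 0 := by
  rw [RowFinite.act_apply_eq_sum _ _ (s := {0}) (by grind [Lmat9])]
  simp [Lmat9]

lemma Lmat9_succ (Q : ℕ → ℂ[X]) (i j : ℕ) : Lmat9 Q (i + 1) j = Umat9 Q i (j + 1) := by
  unfold Lmat9 Umat9
  rw [Nat.add_sub_cancel, Wr_swap (Q (i + 1)) (Q i), Wr_swap (Q (i + 1 + 1)) (Q (i + 1)),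
    Wr_swap (Q (i + 1 + 1)) (Q i)]
  grind

end Banded

/-! ### Associated polynomials and the two factorizations -/

/-- The associated polynomials of the first kind of the orthogonal sequence `P` of `u`. -/
def associated (u : ℕ → ℂ) (P : ℕ → ℂ[X]) (n : ℕ) : ℂ[X] :=
  (u 0)⁻¹ • differenceQuotient (functional u) (P (n + 1))

section Associated

variable {u : ℕ → ℂ} {P : ℕ → ℂ[X]}

lemma IsSMOP.natDegree_associated_le (hP : IsSMOP u P) (n : ℕ) :
    (associated u P n).natDegree ≤ n :=
  (natDegree_smul_le ..).trans (natDegree_differenceQuotient_le (hP.2.1 _).le)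

lemma IsSMOP.coeff_associated_self (hP : IsSMOP u P) (n : ℕ) :
    (associated u P n).coeff n = 1 := by
  rw [associated, coeff_smul, coeff_differenceQuotient_of_natDegree_le (hP.2.1 _).le,
    hP.coeff_self, functional_one, one_mul, smul_eq_mul, inv_mul_cancel₀ hP.moment_zero_ne_zero]

lemma IsSMOP.associated_zero (hP : IsSMOP u P) : associated u P 0 = 1 := by
  rw [eq_C_of_natDegree_le_zero (hP.natDegree_associated_le 0), hP.coeff_associated_self, C_1]

lemma IsSMOP.linearIndependent_associated (hP : IsSMOP u P) :
    LinearIndependent ℂ (associated u P) :=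
  Polynomial.Sequence.linearIndependent
    { elems' := associated u P
      degree_eq' := fun n => degree_eq_of_le_of_coeff_ne_zero
        (degree_le_of_natDegree_le (hP.natDegree_associated_le n))
        (by rw [hP.coeff_associated_self]; exact one_ne_zero) }

lemma IsSMOP.X_mul_associated (hP : IsSMOP u P) (n : ℕ) :
    X * associated u P n = (u 0)⁻¹ • differenceQuotient (functional u) (X * P (n + 1)) := by
  have hzero : functional u (P (n + 1)) = 0 := by
    simpa using mem_orthogonalBelow.1 (hP.mem_orthogonalBelow (n + 1)) 0 n.succ_pos
  rw [differenceQuotient_X_mul, hzero, C_0, add_zero, associated, mul_smul_comm]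

lemma IsSMOP.hasTTRR_associated (hP : IsSMOP u P) {a b : ℕ → ℂ} (h : HasTTRR P a b) :
    HasTTRR (associated u P) (fun n => a (n + 1)) (fun n => b (n + 1)) := by
  refine ⟨hP.associated_zero, ?_, fun n hn => ?_⟩
  · rw [hP.X_mul_associated, h.2.2 _ le_rfl]
    simp [associated, ← smul_eq_C_mul, smul_comm (u 0)⁻¹, hP.eq_one, differenceQuotient_C]
  · obtain ⟨n, rfl⟩ := Nat.exists_eq_add_of_le' hn
    rw [hP.X_mul_associated, h.2.2 _ (Nat.succ_pos _)]
    simp [associated, ← smul_eq_C_mul, smul_comm (u 0)⁻¹]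

lemma IsSMOP.act_Umat9_mem_orthogonalBelow (hP : IsSMOP u P) (n : ℕ) :
    (rowFinite_Umat9 P).act P n ∈ orthogonalBelow (functional u) n := by
  have hmem {m : ℕ} (hm : n ≤ m) : P m ∈ orthogonalBelow (functional u) n :=
    orthogonalBelow_anti hm (hP.mem_orthogonalBelow m)
  rw [act_Umat9]
  exact add_mem (add_mem (hmem (by lia)) (Submodule.smul_mem _ _ (hmem n.le_succ)))
    (Submodule.smul_mem _ _ (hmem le_rfl))

lemma IsSMOP.natDegree_act_Umat9_le (hP : IsSMOP u P) (n : ℕ) :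
    ((rowFinite_Umat9 P).act P n).natDegree ≤ n + 2 := by
  rw [act_Umat9]
  exact natDegree_add_le_of_degree_le (natDegree_add_le_of_degree_le (hP.2.1 _).le
    ((natDegree_smul_le ..).trans (by rw [hP.2.1]; lia)))
    ((natDegree_smul_le ..).trans (by rw [hP.2.1]; lia))

lemma IsSMOP.coeff_act_Umat9 (hP : IsSMOP u P) (n : ℕ) :
    ((rowFinite_Umat9 P).act P n).coeff (n + 2) = 1 := by
  have hvanish {m : ℕ} (hm : m < n + 2) : (P m).coeff (n + 2) = 0 :=
    coeff_eq_zero_of_natDegree_lt (by rwa [hP.2.1])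
  rw [act_Umat9]
  simp [hP.coeff_self, hvanish]

variable {w : ℕ → ℂ} {Q : ℕ → ℂ[X]}

protected lemma IsInverseMoments.act_Umat9 (h : IsInverseMoments u w) (hP : IsSMOP u P)
    (hQ : IsSMOP w Q) (hW : ∀ n, Wr (Q n) (Q (n + 1)) 0 ≠ 0) :
    (rowFinite_Umat9 Q).act Q = fun n => X ^ 2 * associated u P n := by
  funext n
  have hmem : X ^ 2 * associated u P n ∈ orthogonalBelow (functional w) n := by
    rw [associated, mul_smul_comm]
    exact Submodule.smul_mem _ _
      (h.X_sq_mul_differenceQuotient_mem_orthogonalBelow (hP.mem_orthogonalBelow (n + 1)))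
  have hdeg : (X ^ 2 * associated u P n).natDegree ≤ n + 2 :=
    natDegree_mul_le.trans (by
      rw [natDegree_X_pow, add_comm]
      exact Nat.add_le_add_right (hP.natDegree_associated_le n) 2)
  obtain ⟨α, β, hαβ⟩ := hQ.exists_eq_add_of_mem_orthogonalBelow hmem hdeg
  rw [coeff_X_pow_mul, hP.coeff_associated_self, one_smul] at hαβ
  obtain ⟨rfl, rfl⟩ := (X_sq_dvd_iff_eq_Umat9 (hW n)).1 (hαβ ▸ dvd_mul_right ..)
  rw [hαβ, act_Umat9]

lemma IsInverseMoments.differenceQuotient_act_Umat9 (h : IsInverseMoments u w)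
    (hP : IsSMOP u P) (hQ : IsSMOP w Q) {n : ℕ} (hW : Wr (P n) (P (n + 1)) 0 ≠ 0) :
    differenceQuotient (functional u) ((rowFinite_Umat9 P).act P n) = u 0 • Q (n + 1) := by
  have hX : X ^ 2 ∣ (rowFinite_Umat9 P).act P n := by
    rw [act_Umat9]
    exact (X_sq_dvd_iff_eq_Umat9 hW).2 ⟨rfl, rfl⟩
  have hdeg := hP.natDegree_act_Umat9_le n
  rw [hQ.eq_coeff_smul_of_mem_orthogonalBelow
      (h.differenceQuotient_mem_orthogonalBelow (hP.act_Umat9_mem_orthogonalBelow n) hX)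
      (natDegree_differenceQuotient_le hdeg),
    coeff_differenceQuotient_of_natDegree_le hdeg, hP.coeff_act_Umat9, one_mul, functional_one]

/- The matrix `L` is `U(P)` moved down by one row and left by one column; the lost column acts on
`P 0 = 1`, which the difference quotient annihilates. -/
lemma IsSMOP.act_Lmat9_associated_succ (hP : IsSMOP u P) (n : ℕ) :
    (rowFinite_Lmat9 P).act (associated u P) (n + 1)
      = (u 0)⁻¹ • differenceQuotient (functional u) ((rowFinite_Umat9 P).act P n) := by
  have hone : differenceQuotient (functional u) 1 = 0 := differenceQuotient_C 1
  rw [RowFinite.map_act,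
    RowFinite.act_apply_eq_sum _ _ (s := Finset.range (n + 2)) (by grind [Lmat9]),
    RowFinite.act_apply_eq_sum _ _ (s := Finset.range (n + 3)) (by grind [Umat9]),
    Finset.sum_range_succ' _ (n + 2), Function.comp_apply, hP.eq_one, hone, smul_zero, add_zero,
    Finset.smul_sum]
  refine Finset.sum_congr rfl fun j _ => ?_
  rw [Lmat9_succ, associated, Function.comp_apply, smul_comm]

lemma IsSMOP.Wr_succ_ne_zero (hP : IsSMOP u P) (hW : ∀ n, 2 ≤ n → Wr (P n) (P (n - 1)) 0 ≠ 0)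
    (n : ℕ) : Wr (P n) (P (n + 1)) 0 ≠ 0 := by
  cases n with
  | zero => simp [Wr, hP.eq_one, ← coeff_zero_eq_eval_zero, coeff_derivative, hP.coeff_self 1]
  | succ n => rw [Wr_swap]; exact neg_ne_zero.2 (hW (n + 2) (by lia))

lemma IsInverseMoments.act_Lmat9_associated (h : IsInverseMoments u w) (hP : IsSMOP u P)
    (hQ : IsSMOP w Q) (hW : ∀ n, Wr (P n) (P (n + 1)) 0 ≠ 0) :
    (rowFinite_Lmat9 P).act (associated u P) = Q := by
  funext n
  cases n with
  | zero => rw [act_Lmat9_zero, hP.associated_zero, hQ.eq_one]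
  | succ n =>
    rw [hP.act_Lmat9_associated_succ, h.differenceQuotient_act_Umat9 hP hQ (hW n),
      inv_smul_smul₀ hP.moment_zero_ne_zero]

end Associated

/-- `(J^{(1)})² = U·L` and `(J⁻)² = L·U` entrywise. -/
theorem stmt_9 (u : ℕ → ℂ) (P : ℕ → Polynomial ℂ) (hP : IsSMOP u P)
    (a b : ℕ → ℂ) (hrec : HasTTRR P a b) (ha : ∀ n, 1 ≤ n → a n ≠ 0)
    (uinv : ℕ → ℂ) (hinv : IsInverseMoments u uinv)
    (Pm : ℕ → Polynomial ℂ) (hPm : IsSMOP uinv Pm)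
    (am bm : ℕ → ℂ) (hrecm : HasTTRR Pm am bm)
    (hW : ∀ n, 2 ≤ n → Wr (P n) (P (n - 1)) 0 ≠ 0)
    (hWm : ∀ n, Wr (Pm n) (Pm (n + 1)) 0 ≠ 0) :
    (∀ i j, mprod (jacobi (fun n => a (n + 1)) (fun n => b (n + 1)))
        (jacobi (fun n => a (n + 1)) (fun n => b (n + 1))) i j
      = mprod (Umat9 Pm) (Lmat9 P) i j)
    ∧ (∀ i j, mprod (jacobi am bm) (jacobi am bm) i j
      = mprod (Lmat9 P) (Umat9 Pm) i j) := by
  have hJ := (hP.hasTTRR_associated hrec).act_jacobi_act_jacobi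
  have hJm := hrecm.act_jacobi_act_jacobi
  have hL := hinv.act_Lmat9_associated hP hPm (hP.Wr_succ_ne_zero hW)
  have hU := hinv.act_Umat9 hP hPm hWm
  refine ⟨congrFun₂ (RowFinite.mprod_eq_mprod (rowFinite_jacobi _ _) (rowFinite_jacobi _ _)
      (rowFinite_Umat9 Pm) (rowFinite_Lmat9 P) hP.linearIndependent_associated ?_),
    congrFun₂ (RowFinite.mprod_eq_mprod (rowFinite_jacobi _ _) (rowFinite_jacobi _ _)
      (rowFinite_Lmat9 P) (rowFinite_Umat9 Pm) hPm.linearIndependent ?_)⟩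
  · rw [hJ, hL, hU]
  · rw [hJm, hU, RowFinite.act_mul_left, hL]
end
end
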